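/- Let c₀ > 0 and let μ_u be a probability measure on [0, 1]. Let 𝒢 be a set of measurable functions g : [0,1]^d × [0,1] → [−c₀, c₀], and for g, g̃ ∈ 𝒢 define u_{g,g̃}(x, y) = ∫_ℝ (F_g(x, t) − F_{g̃}(x, t))·(F_{g̃}(x, t) − 1{y ≤ t}) dt, where F_g(x, t) = μ_u({u : g(x, u) ≤ t}) and y ranges over [−c₀, c₀]. Suppose {g₁, …, g_N} ⊆ 𝒢 is an ε*-net of 𝒢 in the sup norm, with π(g) denoting a nearest net element of g. Then for all g, g̃ ∈ 𝒢, all x ∈ [0,1]^d and all y ∈ [−c₀, c₀], |u_{g,g̃}(x, y) − u_{π(g),π(g̃)}(x, y)| ≤ 20·√(c₀·ε*). -/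

import Mathlib

open MeasureTheory

/-- The induced conditional CDF `F_g(x, t) = μᵤ({u : g(x,u) ≤ t})` of a generator
`g : [0,1]^d × [0,1] → ℝ` under a noise distribution `μᵤ` on `[0,1]`. -/
noncomputable def inducedCDF {d : ℕ} (μu : Measure (Set.Icc (0:ℝ) 1))
    (g : (Fin d → Set.Icc (0:ℝ) 1) → Set.Icc (0:ℝ) 1 → ℝ)
    (x : Fin d → Set.Icc (0:ℝ) 1) (t : ℝ) : ℝ :=
  (μu {u | g x u ≤ t}).toReal

/-!
The distribution functions of two random variables on a common probability space satisfy
`∫ |F_X - F_Y| ≤ 𝔼 |X - Y|`: at level `t` they differ by at most the probability that `t` separates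
`X` from `Y`, and by Tonelli the integral over `t` of this probability is the expected length of the
interval between `X` and `Y`. As both factors of the cross-term integrand lie in `[-1, 1]`, the
cross term moves by at most `𝔼 |X - X'| + 2 𝔼 |Y - Y'|` when `(X, Y)` is replaced by `(X', Y')`.
Each expectation is at most both `ε` and `2c`, hence at most their geometric mean `√(2cε)`.
-/

section

open Set
open scoped symmDiff

lemma volume_Ici_symmDiff_Ici (a b : ℝ) : volume (Ici a ∆ Ici b) = edist a b := by
  wlog hab : a ≤ b generalizing a b
  · rw [symmDiff_comm, edist_comm, this b a (le_of_not_ge hab)]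
  rw [symmDiff_of_ge (Ici_subset_Ici.2 hab), Ici_sdiff_Ici, Real.volume_Ico, edist_comm, edist_dist,
    Real.dist_eq, abs_of_nonneg (sub_nonneg.2 hab)]

variable {Ω : Type*} [MeasurableSpace Ω] {μ : Measure Ω} {X Y X' Y' : Ω → ℝ}

lemma lintegral_measure_symmDiff_setOf_le [SFinite μ] (hX : AEMeasurable X μ)
    (hY : AEMeasurable Y μ) :
    ∫⁻ t, μ ({ω | X ω ≤ t} ∆ {ω | Y ω ≤ t}) = ∫⁻ ω, edist (X ω) (Y ω) ∂μ := by
  let separated : Set (ℝ × Ω) := {p | X p.2 ≤ p.1} ∆ {p | Y p.2 ≤ p.1}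
  have separated_meas : NullMeasurableSet separated (volume.prod μ) :=
    (nullMeasurableSet_le hX.comp_snd measurable_fst.aemeasurable).symmDiff
      (nullMeasurableSet_le hY.comp_snd measurable_fst.aemeasurable)
  calc
    ∫⁻ t, μ ({ω | X ω ≤ t} ∆ {ω | Y ω ≤ t})
        = ∫⁻ t, ∫⁻ ω, separated.indicator 1 (t, ω) ∂μ := by
      refine lintegral_congr fun t ↦ (lintegral_indicator_one₀ ?_).symm
      exact (nullMeasurableSet_le hX aemeasurable_const).symmDiff
        (nullMeasurableSet_le hY aemeasurable_const)
    _ = ∫⁻ ω, (∫⁻ t, separated.indicator 1 (t, ω)) ∂μ :=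
      lintegral_lintegral_swap (f := fun t ω ↦ separated.indicator 1 (t, ω))
        (aemeasurable_one.indicator₀ separated_meas)
    _ = ∫⁻ ω, volume (Ici (X ω) ∆ Ici (Y ω)) ∂μ :=
      lintegral_congr fun ω ↦ lintegral_indicator_one (s := Ici (X ω) ∆ Ici (Y ω))
        (measurableSet_Ici.symmDiff measurableSet_Ici)
    _ = ∫⁻ ω, edist (X ω) (Y ω) ∂μ := by simp only [volume_Ici_symmDiff_Ici]

/-- The distribution function `t ↦ μ {X ≤ t}` of a real random variable `X` on `(Ω, μ)`. It is
defined from `X` rather than from its law so that `inducedCDF μ g x` unfolds to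
`distribFun μ (g x)`. -/
noncomputable def distribFun (μ : Measure Ω) (X : Ω → ℝ) (t : ℝ) : ℝ :=
  μ.real {ω | X ω ≤ t}

lemma distribFun_mem_Icc [IsProbabilityMeasure μ] (t : ℝ) : distribFun μ X t ∈ Icc (0 : ℝ) 1 :=
  ⟨measureReal_nonneg, measureReal_le_one⟩

lemma monotone_distribFun [IsFiniteMeasure μ] : Monotone (distribFun μ X) :=
  fun _ _ hst ↦ measureReal_mono fun _ hω ↦ le_trans hω hst

lemma lintegral_enorm_distribFun_sub_le [IsFiniteMeasure μ] (hX : AEMeasurable X μ)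
    (hY : AEMeasurable Y μ) :
    ∫⁻ t, ‖distribFun μ X t - distribFun μ Y t‖ₑ ≤ ∫⁻ ω, ‖X ω - Y ω‖ₑ ∂μ := by
  simp only [← edist_eq_enorm_sub (X _), ← lintegral_measure_symmDiff_setOf_le hX hY]
  refine lintegral_mono fun t ↦ ?_
  rw [Real.enorm_eq_ofReal_abs, ← ofReal_measureReal]
  exact ENNReal.ofReal_le_ofReal <| abs_measureReal_sub_le_measureReal_symmDiff
    (nullMeasurableSet_le hX aemeasurable_const) (nullMeasurableSet_le hY aemeasurable_const)

lemma integrable_distribFun_sub [IsFiniteMeasure μ] (hX : Integrable X μ) (hY : Integrable Y μ) :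
    Integrable fun t ↦ distribFun μ X t - distribFun μ Y t :=
  ⟨(monotone_distribFun.measurable.sub monotone_distribFun.measurable).aestronglyMeasurable,
    (lintegral_enorm_distribFun_sub_le hX.aemeasurable hY.aemeasurable).trans_lt
      (hX.sub hY).hasFiniteIntegral⟩

lemma integral_abs_distribFun_sub_le [IsFiniteMeasure μ] (hX : Integrable X μ)
    (hY : Integrable Y μ) :
    ∫ t, |distribFun μ X t - distribFun μ Y t| ≤ ∫ ω, |X ω - Y ω| ∂μ := by
  simp only [← Real.norm_eq_abs]
  rw [integral_norm_eq_lintegral_enorm (integrable_distribFun_sub hX hY).aestronglyMeasurable,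
    integral_norm_eq_lintegral_enorm (f := fun ω ↦ X ω - Y ω) (hX.sub hY).aestronglyMeasurable]
  exact ENNReal.toReal_mono (hX.sub hY).hasFiniteIntegral.ne
    (lintegral_enorm_distribFun_sub_le hX.aemeasurable hY.aemeasurable)

lemma ite_one_zero_mem_Icc (p : Prop) [Decidable p] :
    (if p then (1 : ℝ) else 0) ∈ Icc (0 : ℝ) 1 := by
  split_ifs <;> simp

/-- The integrand at level `t` of the cross term `u_{X,Y}(y)` of two random variables on `(Ω, μ)`,
with `y` entering through the distribution function `1{y ≤ t}` of the point mass at `y`. -/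
noncomputable def crossTermIntegrand (μ : Measure Ω) (X Y : Ω → ℝ) (y t : ℝ) : ℝ :=
  (distribFun μ X t - distribFun μ Y t) * (distribFun μ Y t - if y ≤ t then 1 else 0)

/-- The cross term `u_{X,Y}(y) = ∫ (F_X(t) - F_Y(t)) (F_Y(t) - 1{y ≤ t}) dt` of two random variables
on `(Ω, μ)`. For generators, `X = g(x, ·)` and `Y = g'(x, ·)`. -/
noncomputable def crossTerm (μ : Measure Ω) (X Y : Ω → ℝ) (y : ℝ) : ℝ :=
  ∫ t, crossTermIntegrand μ X Y y t

lemma integrable_crossTermIntegrand [IsProbabilityMeasure μ] (hX : Integrable X μ)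
    (hY : Integrable Y μ) (y : ℝ) : Integrable (crossTermIntegrand μ X Y y) := by
  refine (integrable_distribFun_sub hX hY).mul_bdd (c := 1) ?_ (.of_forall fun t ↦ ?_)
  · exact (monotone_distribFun.measurable.sub
      (measurable_const.ite measurableSet_Ici measurable_const)).aestronglyMeasurable
  · exact Real.dist_le_of_mem_Icc_01 (distribFun_mem_Icc t) (ite_one_zero_mem_Icc _)

lemma abs_sub_mul_sub_sub_le {a b a' b' i : ℝ} (hb : b ∈ Icc (0 : ℝ) 1) (ha' : a' ∈ Icc (0 : ℝ) 1)
    (hb' : b' ∈ Icc (0 : ℝ) 1) (hi : i ∈ Icc (0 : ℝ) 1) :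
    |(a - b) * (b - i) - (a' - b') * (b' - i)| ≤ |a - a'| + 2 * |b - b'| := by
  have hbi : |b - i| ≤ 1 := Real.dist_le_of_mem_Icc_01 hb hi
  have hab' : |a' - b'| ≤ 1 := Real.dist_le_of_mem_Icc_01 ha' hb'
  calc
    |(a - b) * (b - i) - (a' - b') * (b' - i)|
        = |(a - a') * (b - i) + ((a' - b') - (b - i)) * (b - b')| := by congr 1; ring
    _ ≤ |a - a'| * |b - i| + (|a' - b'| + |b - i|) * |b - b'| := by
      grw [abs_add_le, abs_mul, abs_mul, abs_sub (a' - b')]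
    _ ≤ |a - a'| * 1 + (1 + 1) * |b - b'| := by gcongr
    _ = |a - a'| + 2 * |b - b'| := by ring

lemma abs_crossTerm_sub_le [IsProbabilityMeasure μ] (hX : Integrable X μ) (hY : Integrable Y μ)
    (hX' : Integrable X' μ) (hY' : Integrable Y' μ) (y : ℝ) :
    |crossTerm μ X Y y - crossTerm μ X' Y' y| ≤
      ∫ ω, |X ω - X' ω| ∂μ + 2 * ∫ ω, |Y ω - Y' ω| ∂μ := by
  have hXY := integrable_crossTermIntegrand hX hY y
  have hXY' := integrable_crossTermIntegrand hX' hY' y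
  have hXX' := (integrable_distribFun_sub hX hX').abs
  have hYY' := (integrable_distribFun_sub hY hY').abs.const_mul 2
  calc
    |crossTerm μ X Y y - crossTerm μ X' Y' y|
        = |∫ t, (crossTermIntegrand μ X Y y t - crossTermIntegrand μ X' Y' y t)| := by
      rw [integral_sub hXY hXY', crossTerm, crossTerm]
    _ ≤ ∫ t, |crossTermIntegrand μ X Y y t - crossTermIntegrand μ X' Y' y t| :=
      abs_integral_le_integral_abs
    _ ≤ ∫ t, (|distribFun μ X t - distribFun μ X' t| +
          2 * |distribFun μ Y t - distribFun μ Y' t|) :=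
      integral_mono (hXY.sub hXY').abs (hXX'.add hYY') fun t ↦
        abs_sub_mul_sub_sub_le (distribFun_mem_Icc t) (distribFun_mem_Icc t)
          (distribFun_mem_Icc t) (ite_one_zero_mem_Icc _)
    _ = (∫ t, |distribFun μ X t - distribFun μ X' t|) +
          2 * ∫ t, |distribFun μ Y t - distribFun μ Y' t| := by
      rw [integral_add hXX' hYY', integral_const_mul]
    _ ≤ ∫ ω, |X ω - X' ω| ∂μ + 2 * ∫ ω, |Y ω - Y' ω| ∂μ := by
      gcongr
      · exact integral_abs_distribFun_sub_le hX hX'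
      · exact integral_abs_distribFun_sub_le hY hY'

lemma integral_le_of_ae_le [IsProbabilityMeasure μ] {f : Ω → ℝ} {C : ℝ} (hf : Integrable f μ)
    (hfC : ∀ᵐ ω ∂μ, f ω ≤ C) : ∫ ω, f ω ∂μ ≤ C := by
  simpa using integral_mono_ae hf (integrable_const C) hfC

lemma integral_abs_sub_le_sqrt [IsProbabilityMeasure μ] {c ε : ℝ} (hX : AEMeasurable X μ)
    (hY : AEMeasurable Y μ) (hXc : ∀ᵐ ω ∂μ, |X ω| ≤ c) (hYc : ∀ᵐ ω ∂μ, |Y ω| ≤ c)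
    (hXY : ∀ᵐ ω ∂μ, |X ω - Y ω| ≤ ε) :
    ∫ ω, |X ω - Y ω| ∂μ ≤ √(2 * c * ε) := by
  have hint : Integrable (fun ω ↦ |X ω - Y ω|) μ :=
    (Integrable.of_bound (hX.sub hY).aestronglyMeasurable ε hXY).abs
  have le_two_mul : ∫ ω, |X ω - Y ω| ∂μ ≤ 2 * c := by
    refine integral_le_of_ae_le hint ?_
    filter_upwards [hXc, hYc] with ω hXω hYω
    linarith [abs_sub (X ω) (Y ω)]
  have le_ε : ∫ ω, |X ω - Y ω| ∂μ ≤ ε := integral_le_of_ae_le hint hXY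
  have nonneg : 0 ≤ ∫ ω, |X ω - Y ω| ∂μ := integral_nonneg fun ω ↦ abs_nonneg _
  refine Real.le_sqrt_of_sq_le ?_
  rw [sq]
  exact mul_le_mul le_two_mul le_ε nonneg (nonneg.trans le_two_mul)

lemma abs_crossTerm_sub_le_sqrt [IsProbabilityMeasure μ] {c ε : ℝ}
    (hX : AEMeasurable X μ) (hY : AEMeasurable Y μ)
    (hX' : AEMeasurable X' μ) (hY' : AEMeasurable Y' μ)
    (hXc : ∀ᵐ ω ∂μ, |X ω| ≤ c) (hYc : ∀ᵐ ω ∂μ, |Y ω| ≤ c)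
    (hX'c : ∀ᵐ ω ∂μ, |X' ω| ≤ c) (hY'c : ∀ᵐ ω ∂μ, |Y' ω| ≤ c)
    (hXX' : ∀ᵐ ω ∂μ, |X ω - X' ω| ≤ ε) (hYY' : ∀ᵐ ω ∂μ, |Y ω - Y' ω| ≤ ε) (y : ℝ) :
    |crossTerm μ X Y y - crossTerm μ X' Y' y| ≤ 3 * √(2 * c * ε) := by
  have stability := abs_crossTerm_sub_le (.of_bound hX.aestronglyMeasurable c hXc)
    (.of_bound hY.aestronglyMeasurable c hYc) (.of_bound hX'.aestronglyMeasurable c hX'c)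
    (.of_bound hY'.aestronglyMeasurable c hY'c) y
  linarith [integral_abs_sub_le_sqrt hX hX' hXc hX'c hXX',
    integral_abs_sub_le_sqrt hY hY' hYc hY'c hYY']

theorem cross_term_net_stability_general {𝒳 : Type*} [IsProbabilityMeasure μ] {c ε : ℝ}
    {𝒢 : Set (𝒳 → Ω → ℝ)} {π : (𝒳 → Ω → ℝ) → 𝒳 → Ω → ℝ}
    (hmeas : ∀ g ∈ 𝒢, ∀ x, AEMeasurable (g x) μ) (hbdd : ∀ g ∈ 𝒢, ∀ x, ∀ᵐ ω ∂μ, |g x ω| ≤ c)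
    (hπ : MapsTo π 𝒢 𝒢) (hπnet : ∀ g ∈ 𝒢, ∀ x, ∀ᵐ ω ∂μ, |g x ω - π g x ω| ≤ ε)
    {g g' : 𝒳 → Ω → ℝ} (hg : g ∈ 𝒢) (hg' : g' ∈ 𝒢) (x : 𝒳) (y : ℝ) :
    |crossTerm μ (g x) (g' x) y - crossTerm μ (π g x) (π g' x) y| ≤ 3 * √(2 * c * ε) :=
  abs_crossTerm_sub_le_sqrt (hmeas g hg x) (hmeas g' hg' x)
    (hmeas _ (hπ hg) x) (hmeas _ (hπ hg') x) (hbdd g hg x) (hbdd g' hg' x)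
    (hbdd _ (hπ hg) x) (hbdd _ (hπ hg') x) (hπnet g hg x) (hπnet g' hg' x) y

end

/-- **Net stability of the cross-term functional.** If `{g₁, …, g_N}` is an `ε*`-net
(in sup norm) of a class `𝒢` of measurable functions
`g : [0,1]^d × [0,1] → [−c₀, c₀]`, with `π` mapping each `g ∈ 𝒢` to a net element
within sup-distance `ε*`, then the functional
`u_{g,g'}(x,y) = ∫ (F_g(x,t) − F_{g'}(x,t)) (F_{g'}(x,t) − 1{y ≤ t}) dt` satisfies
`|u_{g,g'}(x,y) − u_{π(g),π(g')}(x,y)| ≤ 20 √(c₀ ε*)` for all `g, g' ∈ 𝒢`, all `x`,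
and all `y ∈ [−c₀, c₀]`. -/
theorem cross_term_net_stability {d : ℕ}
    (c₀ : ℝ) (hc₀ : 0 < c₀)
    (μu : Measure (Set.Icc (0:ℝ) 1)) [IsProbabilityMeasure μu]
    (𝒢 : Set ((Fin d → Set.Icc (0:ℝ) 1) → Set.Icc (0:ℝ) 1 → ℝ))
    (hmeas : ∀ g ∈ 𝒢, Measurable (Function.uncurry g))
    (hbdd : ∀ g ∈ 𝒢, ∀ x u, |g x u| ≤ c₀)
    (εstar : ℝ) (hεstar : 0 < εstar)
    (S : Finset ((Fin d → Set.Icc (0:ℝ) 1) → Set.Icc (0:ℝ) 1 → ℝ))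
    (hS : ↑S ⊆ 𝒢)
    (π : ((Fin d → Set.Icc (0:ℝ) 1) → Set.Icc (0:ℝ) 1 → ℝ) →
         ((Fin d → Set.Icc (0:ℝ) 1) → Set.Icc (0:ℝ) 1 → ℝ))
    (hπS : ∀ g ∈ 𝒢, π g ∈ S)
    (hπnet : ∀ g ∈ 𝒢, ∀ x u, |g x u - π g x u| ≤ εstar) :
    ∀ g ∈ 𝒢, ∀ g' ∈ 𝒢, ∀ x, ∀ y ∈ Set.Icc (-c₀) c₀,
      |(∫ t : ℝ, (inducedCDF μu g x t - inducedCDF μu g' x t) *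
          (inducedCDF μu g' x t - (if y ≤ t then (1:ℝ) else 0))) -
       (∫ t : ℝ, (inducedCDF μu (π g) x t - inducedCDF μu (π g') x t) *
          (inducedCDF μu (π g') x t - (if y ≤ t then (1:ℝ) else 0)))|
        ≤ 20 * Real.sqrt (c₀ * εstar) := by
  intro g hg g' hg' x y _
  calc
    _ ≤ 3 * √(2 * c₀ * εstar) := cross_term_net_stability_general
      (fun f hf _ ↦ (hmeas f hf).of_uncurry_left.aemeasurable)
      (fun f hf z ↦ .of_forall (hbdd f hf z)) (fun f hf ↦ hS (hπS f hf))
      (fun f hf z ↦ .of_forall (hπnet f hf z)) hg hg' x y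
    _ = 3 * √2 * √(c₀ * εstar) := by rw [mul_assoc 2, Real.sqrt_mul zero_le_two, mul_assoc]
    _ ≤ 20 * √(c₀ * εstar) := by
      gcongr
      linarith [Real.sqrt_two_lt_three_halves]
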